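/- arXiv:2604.26392 — 3 statements merged into one kernel-verified Lean document; each statement's English description precedes it below -/
import Mathlib

section
/- Let d ≥ 2 and let i, k, m, p ∈ {1,…,d}. Then, with respect to the Haar probability measure μ_O on the real orthogonal group O(d), ∫_{O(d)} O_{ki} O_{km} O_{pi} O_{pm} dμ_O(O) = c₁·(δ_{im} + δ_{kp} + δ_{im}δ_{kp}) − c₂·(1 + δ_{im} + δ_{kp} + 3δ_{im}δ_{kp}), where c₁ = (d+1)/(d(d−1)(d+2)) and c₂ = 1/(d(d−1)(d+2)). -/
open MeasureTheory Matrix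

noncomputable section

instance (d : ℕ) : MeasurableSpace (Matrix.orthogonalGroup (Fin d) ℝ) := borel _

/-- Kronecker delta on `Fin d`, valued in `ℝ`. -/
def kdelta {d : ℕ} (i j : Fin d) : ℝ := if i = j then 1 else 0

instance (d : ℕ) : BorelSpace (Matrix.orthogonalGroup (Fin d) ℝ) := ⟨rfl⟩

def refl2 {d : ℕ} (k p : Fin d) (c s : ℝ) : Matrix (Fin d) (Fin d) ℝ :=
  1 + (Matrix.single k k (c - 1) + Matrix.single k p s + Matrix.single p k s
    + Matrix.single p p (-c - 1))

lemma refl2_mul {d : ℕ} {k p : Fin d} (hkp : k ≠ p) (c s : ℝ) (A : Matrix (Fin d) (Fin d) ℝ)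
    (a b : Fin d) : (refl2 k p c s * A) a b =
      if a = k then c * A k b + s * A p b else if a = p then s * A k b - c * A p b else A a b := by
  unfold refl2
  have key : ∀ (x y : Fin d) (r : ℝ), (Matrix.single x y r * A) a b = if a = x then r * A y b else 0 := by
    intro x y r
    split_ifs with h
    · subst h; simp
    · exact Matrix.single_mul_apply_of_ne _ _ _ _ _ h _
  simp only [add_mul, Matrix.add_apply, one_mul, key]
  by_cases h1 : a = k
  · subst h1; simp [hkp]; ring
  · by_cases h2 : a = p
    · subst h2; simp [h1]; ring
    · simp [h1, h2]

lemma refl2_mem {d : ℕ} {k p : Fin d} (hkp : k ≠ p) {c s : ℝ} (h : c ^ 2 + s ^ 2 = 1) :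
    refl2 k p c s ∈ Matrix.orthogonalGroup (Fin d) ℝ := by
  rw [Matrix.mem_orthogonalGroup_iff]
  have ht : star (refl2 k p c s) = refl2 k p c s := by
    rw [Matrix.star_eq_conjTranspose]
    simp only [refl2, Matrix.conjTranspose_add, Matrix.conjTranspose_one, Matrix.conjTranspose_single,
      star_trivial]
    abel
  have h2 : refl2 k p c s * refl2 k p c s = 1 := by
    have e : refl2 k p c s = refl2 k p c s * 1 := (mul_one _).symm
    ext a b
    rw [refl2_mul hkp]
    rw [e]
    simp only [refl2_mul hkp]
    have hpk : p ≠ k := hkp.symm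
    by_cases h1 : a = k
    · subst h1; simp [hkp, hpk]; linear_combination (1 : Matrix (Fin d) (Fin d) ℝ) a b * h
    · by_cases h2 : a = p
      · subst h2; simp [h1, hkp]; linear_combination (1 : Matrix (Fin d) (Fin d) ℝ) a b * h
      · simp [h1, h2]
  first
  | (rw [ht]; exact h2)
  | (rw [Matrix.star_eq_conjTranspose, Matrix.conjTranspose_eq_transpose_of_trivial] at ht
     rw [ht]; exact h2)

lemma entry_cont {d : ℕ} (a b : Fin d) :
    Continuous (fun O : Matrix.orthogonalGroup (Fin d) ℝ => (O : Matrix (Fin d) (Fin d) ℝ) a b) :=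
  (continuous_subtype_val).matrix_elem a b

lemma entry_bd {d : ℕ} (O : Matrix.orthogonalGroup (Fin d) ℝ) (a b : Fin d) :
    |(O : Matrix (Fin d) (Fin d) ℝ) a b| ≤ 1 := by
  have := entry_norm_bound_of_unitary (𝕜 := ℝ) O.2 a b
  simpa using this

section
variable {d : ℕ} (μ : Measure (Matrix.orthogonalGroup (Fin d) ℝ))

lemma int2 [IsProbabilityMeasure μ] (a b a' b' : Fin d) :
    Integrable (fun O : Matrix.orthogonalGroup (Fin d) ℝ => O.1 a b * O.1 a' b') μ := by
  refine Integrable.of_bound (C := 1)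
    ((entry_cont a b).mul (entry_cont a' b')).aestronglyMeasurable (ae_of_all _ fun O => ?_)
  rw [norm_mul]
  exact mul_le_one₀ (entry_bd O a b) (norm_nonneg _) (entry_bd O a' b')

lemma int4 [IsProbabilityMeasure μ] (a b a' b' e f e' f' : Fin d) :
    Integrable (fun O : Matrix.orthogonalGroup (Fin d) ℝ =>
      O.1 a b * O.1 a' b' * O.1 e f * O.1 e' f') μ := by
  refine Integrable.of_bound (C := 1)
    ((((entry_cont a b).mul (entry_cont a' b')).mul (entry_cont e f)).mul
      (entry_cont e' f')).aestronglyMeasurable (ae_of_all _ fun O => ?_)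
  rw [norm_mul, norm_mul, norm_mul]
  exact mul_le_one₀ (mul_le_one₀ (mul_le_one₀ (entry_bd O a b) (norm_nonneg _) (entry_bd O a' b'))
    (norm_nonneg _) (entry_bd O e f)) (norm_nonneg _) (entry_bd O e' f')

lemma inv_refl [μ.IsHaarMeasure] {k p : Fin d} (hkp : k ≠ p) {c s : ℝ} (h : c ^ 2 + s ^ 2 = 1)
    (g : (Fin d → Fin d → ℝ) → ℝ) :
    ∫ O : Matrix.orthogonalGroup (Fin d) ℝ, g (fun a b =>
      if a = k then c * O.1 k b + s * O.1 p b
      else if a = p then s * O.1 k b - c * O.1 p b else O.1 a b) ∂μ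
    = ∫ O : Matrix.orthogonalGroup (Fin d) ℝ, g (fun a b => O.1 a b) ∂μ := by
  rw [← integral_mul_left_eq_self (μ := μ)
    (fun O : Matrix.orthogonalGroup (Fin d) ℝ => g (fun a b => O.1 a b)) ⟨_, refl2_mem hkp h⟩]
  congr 1
  ext O
  congr 1
  ext a b
  exact (refl2_mul hkp c s O.1 a b).symm

lemma col_orth (O : Matrix.orthogonalGroup (Fin d) ℝ) (i m : Fin d) :
    ∑ p, O.1 p i * O.1 p m = kdelta i m := by
  have := congrFun (congrFun (Matrix.UnitaryGroup.star_mul_self O) i) m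
  simpa [Matrix.mul_apply, Matrix.one_apply, Matrix.star_apply, kdelta] using this

variable [μ.IsHaarMeasure] [IsProbabilityMeasure μ]

/-- second moment, one row -/
lemma m2 (hd : 2 ≤ d) (i m k : Fin d) : (d : ℝ) * ∫ O, O.1 k i * O.1 k m ∂μ = kdelta i m := by
  have h1 : ∀ p, ∫ O, O.1 p i * O.1 p m ∂μ = ∫ O, O.1 k i * O.1 k m ∂μ := by
    intro p
    by_cases hkp : k = p
    · rw [hkp]
    have := inv_refl μ hkp (c := 0) (s := 1) (by norm_num) (fun A => A k i * A k m)
    simpa using this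
  have h2 : ∫ O : Matrix.orthogonalGroup (Fin d) ℝ, ∑ p, O.1 p i * O.1 p m ∂μ = kdelta i m := by
    simp_rw [col_orth]; simp
  rw [integral_finsetSum _ (fun p _ => int2 μ _ _ _ _)] at h2
  simp_rw [h1] at h2
  simpa using h2

lemma c_const (i m k p : Fin d) : ∫ O, O.1 p i * O.1 p m * O.1 p i * O.1 p m ∂μ
    = ∫ O, O.1 k i * O.1 k m * O.1 k i * O.1 k m ∂μ := by
  by_cases hkp : k = p
  · rw [hkp]
  have := inv_refl μ hkp (c := 0) (s := 1) (by norm_num) (fun A => A k i * A k m * A k i * A k m)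
  simpa using this

lemma e_const (i m k p q : Fin d) (hp : p ≠ k) (hq : q ≠ k) :
    ∫ O, O.1 k i * O.1 k m * O.1 p i * O.1 p m ∂μ
    = ∫ O, O.1 k i * O.1 k m * O.1 q i * O.1 q m ∂μ := by
  by_cases hpq : q = p
  · rw [hpq]
  have := inv_refl μ hpq (c := 0) (s := 1) (by norm_num) (fun A => A k i * A k m * A q i * A q m)
  simpa [hp.symm, hq.symm] using this

lemma sum_e (hd : 2 ≤ d) (i m k : Fin d) :
    (d : ℝ) * ∑ p, ∫ O, O.1 k i * O.1 k m * O.1 p i * O.1 p m ∂μ = kdelta i m * kdelta i m := by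
  rw [← integral_finsetSum _ (fun p _ => int4 μ _ _ _ _ _ _ _ _)]
  have : ∀ O : Matrix.orthogonalGroup (Fin d) ℝ, ∑ p, O.1 k i * O.1 k m * O.1 p i * O.1 p m
      = O.1 k i * O.1 k m * kdelta i m := by
    intro O; rw [← col_orth O i m, Finset.mul_sum]; simp only [mul_assoc]
  simp_rw [this]
  rw [integral_mul_const, ← mul_assoc, m2 μ hd]

lemma sum_f (hd : 2 ≤ d) (i m k : Fin d) :
    (d : ℝ) * ∑ p, ∫ O, O.1 k i * O.1 k i * O.1 p m * O.1 p m ∂μ = 1 := by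
  rw [← integral_finsetSum _ (fun p _ => int4 μ _ _ _ _ _ _ _ _)]
  have : ∀ O : Matrix.orthogonalGroup (Fin d) ℝ, ∑ p, O.1 k i * O.1 k i * O.1 p m * O.1 p m
      = O.1 k i * O.1 k i * kdelta m m := by
    intro O; rw [← col_orth O m m, Finset.mul_sum]; simp only [mul_assoc]
  simp_rw [this]
  rw [integral_mul_const, ← mul_assoc, m2 μ hd]
  simp [kdelta]

lemma rot (i m k p : Fin d) (hkp : k ≠ p) :
    (∫ O, O.1 k i * O.1 k i * O.1 p m * O.1 p m ∂μ)
    + (∫ O, O.1 k m * O.1 k m * O.1 p i * O.1 p i ∂μ)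
    + 4 * (∫ O, O.1 k i * O.1 k m * O.1 p i * O.1 p m ∂μ)
    = 2 * ∫ O, O.1 k i * O.1 k m * O.1 k i * O.1 k m ∂μ := by
  have hs : (√2)⁻¹ ^ 2 = (1 / 2 : ℝ) := by rw [inv_pow, Real.sq_sqrt (by norm_num)]; norm_num
  have := inv_refl μ hkp (c := (√2)⁻¹) (s := (√2)⁻¹) (by rw [hs]; norm_num)
    (fun A => A k i * A k m * A k i * A k m + A p i * A p m * A p i * A p m)
  simp only [if_true, hkp.symm, if_false] at this
  set t := (√2)⁻¹
  rw [integral_add (int4 μ _ _ _ _ _ _ _ _) (int4 μ _ _ _ _ _ _ _ _), c_const μ i m k p] at this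
  have e : ∀ O : Matrix.orthogonalGroup (Fin d) ℝ,
      (t * O.1 k i + t * O.1 p i) * (t * O.1 k m + t * O.1 p m) * (t * O.1 k i + t * O.1 p i) *
        (t * O.1 k m + t * O.1 p m) +
      (t * O.1 k i - t * O.1 p i) * (t * O.1 k m - t * O.1 p m) * (t * O.1 k i - t * O.1 p i) *
        (t * O.1 k m - t * O.1 p m) =
      (1 / 2) * (O.1 k i * O.1 k m * O.1 k i * O.1 k m + O.1 p i * O.1 p m * O.1 p i * O.1 p m
        + O.1 k i * O.1 k i * O.1 p m * O.1 p m + O.1 k m * O.1 k m * O.1 p i * O.1 p i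
        + 4 * (O.1 k i * O.1 k m * O.1 p i * O.1 p m)) := by
    intro O
    have h4 : t ^ 4 = 1 / 4 := by rw [show t ^ 4 = (t ^ 2) ^ 2 by ring, hs]; norm_num
    generalize O.1 k i = x, O.1 k m = y, O.1 p i = x', O.1 p m = y'
    linear_combination (2 * (x * y * x * y + x' * y' * x' * y' + x * x * y' * y' + y * y * x' * x'
      + 4 * (x * y * x' * y'))) * h4
  simp_rw [e] at this
  rw [integral_const_mul, integral_add, integral_add, integral_add, integral_add,
    integral_const_mul, c_const μ i m k p] at this
  · linarith
  all_goals
    repeat' apply Integrable.add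
    all_goals first
      | exact int4 μ _ _ _ _ _ _ _ _
      | exact (int4 μ _ _ _ _ _ _ _ _).const_mul _

end

/-- **Fourth moment of Haar-random orthogonal matrix entries.**
For `d ≥ 2` and indices `i, k, m, p`,
`∫ O_{ki} O_{km} O_{pi} O_{pm} dμ(O) = c₁(δ_{im} + δ_{kp} + δ_{im}δ_{kp})
  − c₂(1 + δ_{im} + δ_{kp} + 3δ_{im}δ_{kp})`,
where `c₁ = (d+1)/(d(d−1)(d+2))` and `c₂ = 1/(d(d−1)(d+2))`. -/
theorem orthogonal_haar_fourth_moment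
    (d : ℕ) (hd : 2 ≤ d) (i k m p : Fin d)
    (μ : Measure (Matrix.orthogonalGroup (Fin d) ℝ))
    [μ.IsHaarMeasure] [IsProbabilityMeasure μ] :
    ∫ O : Matrix.orthogonalGroup (Fin d) ℝ,
        (O : Matrix (Fin d) (Fin d) ℝ) k i * (O : Matrix (Fin d) (Fin d) ℝ) k m *
          (O : Matrix (Fin d) (Fin d) ℝ) p i * (O : Matrix (Fin d) (Fin d) ℝ) p m ∂μ
      = ((d : ℝ) + 1) / (d * (d - 1) * (d + 2)) *
            (kdelta i m + kdelta k p + kdelta i m * kdelta k p) -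
          1 / (d * (d - 1) * (d + 2)) *
            (1 + kdelta i m + kdelta k p + 3 * kdelta i m * kdelta k p) := by
  have hd' : (2 : ℝ) ≤ d := by exact_mod_cast hd
  have hdd : kdelta i m * kdelta i m = kdelta i m := by simp [kdelta]
  have se := sum_e μ hd i m k
  have sf := sum_f μ hd i m k
  have sf' := sum_f μ hd m i k
  have hr : ∑ q ∈ Finset.univ.erase k, ((∫ O, O.1 k i * O.1 k i * O.1 q m * O.1 q m ∂μ)
    + (∫ O, O.1 k m * O.1 k m * O.1 q i * O.1 q i ∂μ)
    + 4 * (∫ O, O.1 k i * O.1 k m * O.1 q i * O.1 q m ∂μ))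
    = ∑ q ∈ Finset.univ.erase k, 2 * ∫ O, O.1 k i * O.1 k m * O.1 k i * O.1 k m ∂μ :=
    Finset.sum_congr rfl fun q hq => rot μ i m k q (Finset.ne_of_mem_erase hq).symm
  rw [Finset.sum_add_distrib, Finset.sum_add_distrib, ← Finset.mul_sum, Finset.sum_const,
    Finset.card_erase_of_mem (Finset.mem_univ _), Finset.card_univ, Fintype.card_fin,
    nsmul_eq_mul, Nat.cast_sub (by omega), Nat.cast_one] at hr
  rw [← Finset.add_sum_erase _ _ (Finset.mem_univ k)] at se sf sf'
  have e1 : ∫ O, O.1 k i * O.1 k i * O.1 k m * O.1 k m ∂μ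
      = ∫ O, O.1 k i * O.1 k m * O.1 k i * O.1 k m ∂μ := by
    congr 1; ext O; ring
  have e2 : ∫ O, O.1 k m * O.1 k m * O.1 k i * O.1 k i ∂μ
      = ∫ O, O.1 k i * O.1 k m * O.1 k i * O.1 k m ∂μ := by
    congr 1; ext O; ring
  rw [e1] at sf
  rw [e2] at sf'
  rw [hdd] at se
  have hc : (d : ℝ) * (d + 2) * ∫ O, O.1 k i * O.1 k m * O.1 k i * O.1 k m ∂μ
      = 1 + 2 * kdelta i m := by
    linear_combination (1/2) * sf + (1/2) * sf' + 2 * se - (d / 2 : ℝ) * hr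
  have n1 : (d : ℝ) ≠ 0 := by positivity
  have n2 : (d : ℝ) - 1 ≠ 0 := by linarith
  have n3 : (d : ℝ) + 2 ≠ 0 := by positivity
  by_cases hkp : k = p
  · subst hkp
    have h1 : kdelta k k = 1 := by simp [kdelta]
    have : ∫ O, O.1 k i * O.1 k m * O.1 k i * O.1 k m ∂μ
      = (1 + 2 * kdelta i m) / (d * (d + 2)) := by
      rw [eq_div_iff (by positivity)]; linear_combination hc
    rw [this, h1]
    field_simp
    ring
  · have h0 : kdelta k p = 0 := by simp [kdelta, hkp]
    have hs : ∑ q ∈ Finset.univ.erase k, ∫ O, O.1 k i * O.1 k m * O.1 q i * O.1 q m ∂μ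
        = ∑ q ∈ Finset.univ.erase k, ∫ O, O.1 k i * O.1 k m * O.1 p i * O.1 p m ∂μ :=
      Finset.sum_congr rfl fun q hq =>
        e_const μ i m k q p (Finset.ne_of_mem_erase hq) (fun h => hkp h.symm)
    rw [hs, Finset.sum_const, Finset.card_erase_of_mem (Finset.mem_univ _), Finset.card_univ,
      Fintype.card_fin, nsmul_eq_mul, Nat.cast_sub (by omega), Nat.cast_one] at se
    have : ∫ O, O.1 k i * O.1 k m * O.1 p i * O.1 p m ∂μ
      = ((d + 1) * kdelta i m - 1 - kdelta i m) / (d * (d - 1) * (d + 2)) := by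
      rw [eq_div_iff (mul_ne_zero (mul_ne_zero n1 n2) n3)]; linear_combination ((d : ℝ) + 2) * se - hc
    rw [this, h0]
    field_simp
    ring
end
end

section
/- Let d ≥ 2 and let ρ be a real density matrix with purity P = Tr(ρ²). Then the Haar average over the unitary group of the purity-constrained imaginarity-generating power equals ∫_{U(d)} ∫_{O(d)} I(U (O ρ Oᵀ) U†) dμ_O(O) dμ_U(U) = (dP − 1)/(2(d+1)). -/
open MeasureTheory Matrix

noncomputable section

/-- The imaginarity of a complex matrix with respect to the computational basis:
`I(ρ) = (1/4)·‖ρ − ρᵀ‖₂²` where `‖A‖₂² = Tr(A†A)` is the squared Hilbert–Schmidt norm. -/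
def Imag {d : ℕ} (ρ : Matrix (Fin d) (Fin d) ℂ) : ℝ :=
  (1 / 4) * (((ρ - ρᵀ)ᴴ * (ρ - ρᵀ)).trace).re

instance (d : ℕ) : MeasurableSpace (Matrix.unitaryGroup (Fin d) ℂ) := borel _

instance borelU_aux (d : ℕ) : BorelSpace (Matrix.unitaryGroup (Fin d) ℂ) := ⟨rfl⟩
instance borelO_aux (d : ℕ) : BorelSpace (Matrix.orthogonalGroup (Fin d) ℝ) := ⟨rfl⟩

theorem compact_unitary_aux (d : ℕ) (𝕜 : Type) [RCLike 𝕜] :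
    CompactSpace (Matrix.unitaryGroup (Fin d) 𝕜) := by
  apply isCompact_iff_compactSpace.mp
  have hK : IsCompact (Set.pi Set.univ fun _ : Fin d => Set.pi Set.univ fun _ : Fin d =>
      Metric.closedBall (0 : 𝕜) 1) :=
    isCompact_univ_pi fun _ => isCompact_univ_pi fun _ => isCompact_closedBall _ _
  have hcl : IsClosed ((Matrix.unitaryGroup (Fin d) 𝕜 : Submonoid _) :
      Set (Matrix (Fin d) (Fin d) 𝕜)) := isClosed_unitary
  refine IsCompact.of_isClosed_subset hK hcl ?_
  intro U hU i _ j _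
  simpa using entry_norm_bound_of_unitary hU i j

instance compactU_aux (d : ℕ) : CompactSpace (Matrix.unitaryGroup (Fin d) ℂ) :=
  compact_unitary_aux d ℂ
instance compactO_aux (d : ℕ) : CompactSpace (Matrix.orthogonalGroup (Fin d) ℝ) :=
  compact_unitary_aux d ℝ

theorem right_inv_aux {d : ℕ} (μU : Measure (Matrix.unitaryGroup (Fin d) ℂ))
    [μU.IsHaarMeasure] [IsProbabilityMeasure μU] : μU.IsMulRightInvariant := by
  constructor
  intro g
  have : IsProbabilityMeasure (Measure.map (· * g) μU) :=
    Measure.isProbabilityMeasure_map (by fun_prop)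
  exact Measure.isHaarMeasure_eq_of_isProbabilityMeasure _ _

/-- squared modulus of the entries of `Tᵀ T`. -/
def wsq {d : ℕ} (T : Matrix (Fin d) (Fin d) ℂ) (a b : Fin d) : ℝ :=
  Complex.normSq ((Tᵀ * T) a b)

theorem wsq_symm {d : ℕ} (T : Matrix (Fin d) (Fin d) ℂ) (a b : Fin d) :
    wsq T a b = wsq T b a := by
  unfold wsq
  congr 1
  simp [Matrix.mul_apply, mul_comm]

theorem wsq_sum {d : ℕ} (T : Matrix.unitaryGroup (Fin d) ℂ) (a : Fin d) :
    ∑ b, wsq (T : Matrix (Fin d) (Fin d) ℂ) a b = 1 := by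
  set M : Matrix (Fin d) (Fin d) ℂ := (T : Matrix (Fin d) (Fin d) ℂ) with hM
  have h1 : M * Mᴴ = 1 := Unitary.mul_star_self_of_mem T.2
  have h2 : Mᴴ * M = 1 := Unitary.star_mul_self_of_mem T.2
  have h3 : (Mᵀ * M) * (Mᵀ * M)ᴴ = 1 := by
    rw [conjTranspose_mul, Matrix.mul_assoc, ← Matrix.mul_assoc M, h1, Matrix.one_mul]
    have := congrArg transpose h2
    rw [transpose_mul, transpose_one] at this
    exact this
  have h4 := congrFun (congrFun h3 a) a
  rw [Matrix.mul_apply] at h4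
  simp only [conjTranspose_apply, one_apply_eq] at h4
  have h5 := congrArg Complex.re h4
  simp only [Complex.re_sum, Complex.one_re] at h5
  rw [← h5]
  refine Finset.sum_congr rfl fun b _ => ?_
  change Complex.normSq _ = (_ * (starRingEnd ℂ) _).re
  rw [Complex.mul_conj, Complex.ofReal_re]

/-- Householder reflection. -/
def hh {d : ℕ} (a b : Fin d) (z : ℂ) : Matrix (Fin d) (Fin d) ℂ :=
  1 - (2 / 5 : ℂ) • vecMulVec (Pi.single a 1 + Pi.single b (2 * z))
    (star (Pi.single a 1 + Pi.single b (2 * z)))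

theorem hh_unitary {d : ℕ} {a b : Fin d} (hab : a ≠ b) (z : ℂ) (hz : star z * z = 1) :
    hh a b z ∈ Matrix.unitaryGroup (Fin d) ℂ := by
  rw [Matrix.mem_unitaryGroup_iff]
  unfold hh
  set v : Fin d → ℂ := Pi.single a 1 + Pi.single b (2 * z) with hv
  have hvv : star v ⬝ᵥ v = 5 := by
    have : star v = Pi.single a 1 + Pi.single b (2 * star z) := by
      ext i
      simp only [hv, Pi.star_apply, Pi.add_apply, Pi.single_apply]
      split_ifs <;> simp
    rw [this, hv]
    simp only [add_dotProduct, single_dotProduct, Pi.add_apply, Pi.single_eq_same]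
    rw [Pi.single_eq_of_ne hab, Pi.single_eq_of_ne hab.symm]
    linear_combination 4 * hz
  have hs : star (1 - (2 / 5 : ℂ) • vecMulVec v (star v)) = 1 - (2 / 5 : ℂ) • vecMulVec v (star v) := by
    rw [star_sub, star_one, star_smul, star_eq_conjTranspose, conjTranspose_vecMulVec]
    simp
  rw [hs]
  simp only [Matrix.sub_mul, Matrix.mul_sub, Matrix.one_mul, Matrix.mul_one, Matrix.smul_mul,
    Matrix.mul_smul, vecMulVec_mul_vecMulVec, hvv, vecMulVec_smul, smul_smul]
  module

theorem wsq_hh {d : ℕ} {a b : Fin d} (hab : a ≠ b) (z : ℂ) (T : Matrix (Fin d) (Fin d) ℂ) :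
    wsq (T * hh a b z) a a = Complex.normSq (9 / 25 * (Tᵀ * T) a a - 24 / 25 * z * (Tᵀ * T) a b
      + 16 / 25 * z ^ 2 * (Tᵀ * T) b b) := by
  unfold wsq
  congr 1
  have hc : ∀ i, (T * hh a b z) i a = 3 / 5 * T i a - 4 / 5 * z * T i b := by
    intro i
    unfold hh
    rw [Matrix.mul_sub, Matrix.mul_one, Matrix.mul_smul, mul_vecMulVec]
    simp [vecMulVec_apply, Matrix.mulVec_add, hab]
    ring
  simp only [Matrix.mul_apply (M := (T * hh a b z)ᵀ), transpose_apply, hc]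
  simp only [Matrix.mul_apply, transpose_apply, Finset.mul_sum, ← Finset.sum_sub_distrib,
    ← Finset.sum_add_distrib]
  exact Finset.sum_congr rfl fun i _ => by ring

theorem wsq_hh_sum {d : ℕ} {a b : Fin d} (hab : a ≠ b) (T : Matrix (Fin d) (Fin d) ℂ) :
    wsq (T * hh a b 1) a a + wsq (T * hh a b (-1)) a a + wsq (T * hh a b Complex.I) a a
      + wsq (T * hh a b (-Complex.I)) a a =
    4 * (81 / 625 * wsq T a a + 576 / 625 * wsq T a b + 256 / 625 * wsq T b b) := by
  simp only [wsq_hh hab]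
  unfold wsq
  generalize (Tᵀ * T) a a = x
  generalize (Tᵀ * T) a b = y
  generalize (Tᵀ * T) b b = w
  have e1 : (9 / 25 : ℂ) = ((9 / 25 : ℝ) : ℂ) := by push_cast; rfl
  have e2 : (24 / 25 : ℂ) = ((24 / 25 : ℝ) : ℂ) := by push_cast; rfl
  have e3 : (16 / 25 : ℂ) = ((16 / 25 : ℝ) : ℂ) := by push_cast; rfl
  rw [e1, e2, e3]
  simp only [Complex.normSq_apply, pow_two, Complex.add_re, Complex.add_im, Complex.sub_re,
    Complex.sub_im, Complex.mul_re, Complex.mul_im, Complex.neg_re, Complex.neg_im, Complex.I_re,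
    Complex.I_im, Complex.one_re, Complex.one_im, Complex.ofReal_re, Complex.ofReal_im]
  ring

theorem wsq_cont {d : ℕ} (a b : Fin d) :
    Continuous fun U : Matrix.unitaryGroup (Fin d) ℂ => wsq (U : Matrix (Fin d) (Fin d) ℂ) a b := by
  unfold wsq
  refine Complex.continuous_normSq.comp ?_
  have : Continuous fun U : Matrix.unitaryGroup (Fin d) ℂ =>
    ((U : Matrix (Fin d) (Fin d) ℂ)ᵀ * (U : Matrix (Fin d) (Fin d) ℂ)) := by fun_prop
  exact this.matrix_elem a b

theorem wsq_int {d : ℕ} (μU : Measure (Matrix.unitaryGroup (Fin d) ℂ))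
    [IsProbabilityMeasure μU] (a b : Fin d) :
    Integrable (fun U : Matrix.unitaryGroup (Fin d) ℂ => wsq (U : Matrix (Fin d) (Fin d) ℂ) a b) μU :=
  (wsq_cont a b).integrable_of_hasCompactSupport (HasCompactSupport.of_compactSpace _)

theorem q_rel {d : ℕ} (μU : Measure (Matrix.unitaryGroup (Fin d) ℂ))
    [μU.IsHaarMeasure] [IsProbabilityMeasure μU] {a b : Fin d} (hab : a ≠ b) :
    544 * ∫ U : Matrix.unitaryGroup (Fin d) ℂ, wsq (U : Matrix (Fin d) (Fin d) ℂ) a a ∂μU =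
    576 * ∫ U : Matrix.unitaryGroup (Fin d) ℂ, wsq (U : Matrix (Fin d) (Fin d) ℂ) a b ∂μU +
    256 * ∫ U : Matrix.unitaryGroup (Fin d) ℂ, wsq (U : Matrix (Fin d) (Fin d) ℂ) b b ∂μU := by
  have := right_inv_aux μU
  have key : ∀ z : ℂ, star z * z = 1 →
      Integrable (fun U : Matrix.unitaryGroup (Fin d) ℂ =>
        wsq ((U : Matrix (Fin d) (Fin d) ℂ) * hh a b z) a a) μU ∧
      ∫ U : Matrix.unitaryGroup (Fin d) ℂ, wsq ((U : Matrix (Fin d) (Fin d) ℂ) * hh a b z) a a ∂μU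
      = ∫ U : Matrix.unitaryGroup (Fin d) ℂ, wsq (U : Matrix (Fin d) (Fin d) ℂ) a a ∂μU := by
    intro z hz
    have h1 := integral_mul_right_eq_self (μ := μU) (fun U : Matrix.unitaryGroup (Fin d) ℂ =>
      wsq (U : Matrix (Fin d) (Fin d) ℂ) a a) ⟨hh a b z, hh_unitary hab z hz⟩
    have h2 := (wsq_int μU a a).comp_mul_right ⟨hh a b z, hh_unitary hab z hz⟩
    exact ⟨h2, h1⟩
  obtain ⟨i1, k1⟩ := key 1 (by simp)
  obtain ⟨i2, k2⟩ := key (-1) (by simp)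
  obtain ⟨i3, k3⟩ := key Complex.I (by simp)
  obtain ⟨i4, k4⟩ := key (-Complex.I) (by simp)
  have h := integral_congr_ae (μ := μU) (Filter.Eventually.of_forall
    fun U : Matrix.unitaryGroup (Fin d) ℂ => wsq_hh_sum hab (U : Matrix (Fin d) (Fin d) ℂ))
  have j1 := (wsq_int μU a a).const_mul (81 / 625)
  have j2 := (wsq_int μU a b).const_mul (576 / 625)
  have j3 := (wsq_int μU b b).const_mul (256 / 625)
  rw [integral_add (by exact (i1.add i2).add i3) i4, integral_add (by exact i1.add i2) i3,
    integral_add i1 i2,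
    k1, k2, k3, k4, integral_const_mul, integral_add (by exact j1.add j2) j3, integral_add j1 j2,
    integral_const_mul, integral_const_mul, integral_const_mul] at h
  linarith

theorem q_val {d : ℕ} (μU : Measure (Matrix.unitaryGroup (Fin d) ℂ))
    [μU.IsHaarMeasure] [IsProbabilityMeasure μU] (a b : Fin d) :
    ∫ U : Matrix.unitaryGroup (Fin d) ℂ, wsq (U : Matrix (Fin d) (Fin d) ℂ) a b ∂μU =
    (1 + if a = b then 1 else 0) / ((d : ℝ) + 1) := by
  have hoff : ∀ a b : Fin d, a ≠ b →
      ∫ U : Matrix.unitaryGroup (Fin d) ℂ, wsq (U : Matrix (Fin d) (Fin d) ℂ) a b ∂μU =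
      (∫ U : Matrix.unitaryGroup (Fin d) ℂ, wsq (U : Matrix (Fin d) (Fin d) ℂ) a a ∂μU) / 2 := by
    intro a b hab
    have h1 := q_rel μU hab
    have h2 := q_rel μU hab.symm
    simp only [wsq_symm _ b a] at h2
    linarith
  have hsum : ∑ c, ∫ U : Matrix.unitaryGroup (Fin d) ℂ,
      wsq (U : Matrix (Fin d) (Fin d) ℂ) a c ∂μU = 1 := by
    rw [← integral_finsetSum _ fun c _ => wsq_int μU a c]
    simp [wsq_sum]
  have hd : (d : ℝ) + 1 ≠ 0 := by positivity
  have hp : ∫ U : Matrix.unitaryGroup (Fin d) ℂ, wsq (U : Matrix (Fin d) (Fin d) ℂ) a a ∂μU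
      = 2 / ((d : ℝ) + 1) := by
    have h3 : ∀ c, ∫ U : Matrix.unitaryGroup (Fin d) ℂ,
      wsq (U : Matrix (Fin d) (Fin d) ℂ) a c ∂μU =
      (∫ U : Matrix.unitaryGroup (Fin d) ℂ, wsq (U : Matrix (Fin d) (Fin d) ℂ) a a ∂μU) / 2 *
        (1 + if a = c then 1 else 0) := by
      intro c
      by_cases hc : a = c
      · subst hc; simp; ring
      · rw [hoff a c hc]; simp [hc]
    rw [Finset.sum_congr rfl fun c _ => h3 c, ← Finset.mul_sum, Finset.sum_add_distrib] at hsum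
    simp at hsum
    rw [eq_div_iff hd]
    linarith
  by_cases hab : a = b
  · subst hab; rw [hp]; norm_num
  · rw [hoff a b hab, hp]; simp [hab]; ring

theorem imag_diag {d : ℕ} (T : Matrix.unitaryGroup (Fin d) ℂ) (l : Fin d → ℝ) :
    Imag ((T : Matrix (Fin d) (Fin d) ℂ) * diagonal (fun i => (l i : ℂ)) *
      (T : Matrix (Fin d) (Fin d) ℂ)ᴴ) =
    1 / 2 * (∑ a, l a ^ 2 - ∑ a, ∑ b, l a * l b * wsq (T : Matrix (Fin d) (Fin d) ℂ) a b) := by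
  set M : Matrix (Fin d) (Fin d) ℂ := (T : Matrix (Fin d) (Fin d) ℂ) with hM
  have h2 : Mᴴ * M = 1 := Unitary.star_mul_self_of_mem T.2
  set D : Matrix (Fin d) (Fin d) ℂ := diagonal (fun i => (l i : ℂ)) with hD
  have hDH : Dᴴ = D := by
    rw [hD, diagonal_conjTranspose]; congr 1; ext i; simp
  have hDT : Dᵀ = D := diagonal_transpose _
  set X := M * D * Mᴴ with hX
  have hXH : Xᴴ = X := by
    rw [hX]; simp [conjTranspose_mul, hDH, Matrix.mul_assoc]
  have hXTH : Xᵀᴴ = Xᵀ := by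
    exact congrArg transpose hXH
  have hXX : (X * X).trace = ((∑ a, l a ^ 2 : ℝ) : ℂ) := by
    have : X * X = M * (D * D) * Mᴴ := by
      rw [hX]
      simp only [Matrix.mul_assoc]
      rw [← Matrix.mul_assoc Mᴴ M, h2, Matrix.one_mul]
    rw [this, Matrix.trace_mul_comm, ← Matrix.mul_assoc, h2, Matrix.one_mul, hD,
      diagonal_mul_diagonal, trace_diagonal]
    push_cast
    exact Finset.sum_congr rfl fun i _ => by ring
  have hXT : (X * Xᵀ).trace = ((∑ a, ∑ b, l a * l b * wsq M a b : ℝ) : ℂ) := by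
    have e : X * Xᵀ = M * (D * (Mᵀ * M)ᴴ * D * Mᵀ) := by
      rw [hX]
      simp only [transpose_mul, conjTranspose_mul, hDT, Matrix.mul_assoc]
      rfl
    rw [e, Matrix.trace_mul_comm, Matrix.mul_assoc]
    rw [Matrix.trace]
    push_cast
    refine Finset.sum_congr rfl fun a _ => ?_
    rw [diag_apply, Matrix.mul_apply]
    refine Finset.sum_congr rfl fun b _ => ?_
    rw [hD, mul_diagonal, diagonal_mul, conjTranspose_apply, wsq_symm, wsq,
      ← Complex.mul_conj]
    change _ * (starRingEnd ℂ) _ * _ * _ = _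
    ring
  unfold Imag
  have : ((X - Xᵀ)ᴴ * (X - Xᵀ)).trace = 2 * (X * X).trace - 2 * (X * Xᵀ).trace := by
    rw [conjTranspose_sub, hXH, hXTH, Matrix.sub_mul, Matrix.mul_sub, Matrix.mul_sub,
      trace_sub, trace_sub, trace_sub, ← transpose_mul, trace_transpose,
      Matrix.trace_mul_comm Xᵀ X]
    ring
  rw [this, hXX, hXT]
  rw [← Complex.ofReal_ofNat, ← Complex.ofReal_mul, ← Complex.ofReal_mul, ← Complex.ofReal_sub,
    Complex.ofReal_re]
  ring

theorem int_U {d : ℕ} (μU : Measure (Matrix.unitaryGroup (Fin d) ℂ))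
    [μU.IsHaarMeasure] [IsProbabilityMeasure μU] (S : Matrix (Fin d) (Fin d) ℂ)
    (hS : S.IsHermitian) (P : ℝ) (h1 : S.trace = 1) (h2 : (S * S).trace = (P : ℂ)) :
    ∫ U : Matrix.unitaryGroup (Fin d) ℂ, Imag ((U : Matrix (Fin d) (Fin d) ℂ) * S *
      (U : Matrix (Fin d) (Fin d) ℂ)ᴴ) ∂μU = ((d : ℝ) * P - 1) / (2 * (d + 1)) := by
  have := right_inv_aux μU
  set V := hS.eigenvectorUnitary with hV
  set l := hS.eigenvalues with hl
  have hVV : (V : Matrix (Fin d) (Fin d) ℂ)ᴴ * (V : Matrix (Fin d) (Fin d) ℂ) = 1 :=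
    Unitary.star_mul_self_of_mem V.2
  have hsp : S = (V : Matrix (Fin d) (Fin d) ℂ) * diagonal (fun i => (l i : ℂ)) *
      (V : Matrix (Fin d) (Fin d) ℂ)ᴴ := by
    have := hS.spectral_theorem
    rw [Unitary.conjStarAlgAut_apply] at this
    exact this
  have hl1 : ∑ a, l a = 1 := by
    rw [hsp, Matrix.trace_mul_comm, ← Matrix.mul_assoc, hVV, Matrix.one_mul, trace_diagonal] at h1
    exact_mod_cast h1
  have hl2 : ∑ a, l a * l a = P := by
    have e : S * S = (V : Matrix (Fin d) (Fin d) ℂ) * (diagonal (fun i => (l i : ℂ)) *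
        diagonal (fun i => (l i : ℂ))) * (V : Matrix (Fin d) (Fin d) ℂ)ᴴ := by
      conv_lhs => rw [hsp]
      simp only [Matrix.mul_assoc]
      rw [← Matrix.mul_assoc (V : Matrix (Fin d) (Fin d) ℂ)ᴴ (V : Matrix (Fin d) (Fin d) ℂ), hVV,
        Matrix.one_mul]
    rw [e, Matrix.trace_mul_comm, ← Matrix.mul_assoc, hVV, Matrix.one_mul, diagonal_mul_diagonal,
      trace_diagonal] at h2
    exact_mod_cast h2
  have hi : ∀ U : Matrix.unitaryGroup (Fin d) ℂ, Imag ((U : Matrix (Fin d) (Fin d) ℂ) * S *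
      (U : Matrix (Fin d) (Fin d) ℂ)ᴴ) =
      (fun W : Matrix.unitaryGroup (Fin d) ℂ => 1 / 2 * (∑ a, l a ^ 2 - ∑ a, ∑ b, l a * l b *
        wsq (W : Matrix (Fin d) (Fin d) ℂ) a b)) (U * V) := by
    intro U
    simp only
    rw [← imag_diag, Submonoid.coe_mul, conjTranspose_mul]
    conv_lhs => rw [hsp]
    simp only [Matrix.mul_assoc]
  rw [integral_congr_ae (Filter.Eventually.of_forall hi), integral_mul_right_eq_self (μ := μU)
    (fun W : Matrix.unitaryGroup (Fin d) ℂ => 1 / 2 * (∑ a, l a ^ 2 - ∑ a, ∑ b, l a * l b *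
        wsq (W : Matrix (Fin d) (Fin d) ℂ) a b)) V]
  have hI : ∀ a b, Integrable (fun W : Matrix.unitaryGroup (Fin d) ℂ => l a * l b *
        wsq (W : Matrix (Fin d) (Fin d) ℂ) a b) μU := fun a b => (wsq_int μU a b).const_mul _
  rw [integral_const_mul, integral_sub (integrable_const _)
    (integrable_finsetSum _ fun a _ => integrable_finsetSum _ fun b _ => hI a b),
    integral_finsetSum _ fun a _ => integrable_finsetSum _ fun b _ => hI a b]
  have hJ : ∀ a, ∫ W : Matrix.unitaryGroup (Fin d) ℂ, ∑ b, l a * l b *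
        wsq (W : Matrix (Fin d) (Fin d) ℂ) a b ∂μU = (l a + l a * l a) / ((d : ℝ) + 1) := by
    intro a
    rw [integral_finsetSum _ fun b _ => hI a b]
    simp only [integral_const_mul, q_val]
    have : ∀ b, l a * l b * ((1 + if a = b then 1 else 0) / ((d : ℝ) + 1)) =
        (l a * l b + if a = b then l a * l b else 0) / ((d : ℝ) + 1) := by
      intro b; split_ifs <;> ring
    simp only [this]
    rw [← Finset.sum_div, Finset.sum_add_distrib, ← Finset.mul_sum, hl1]
    simp
  simp only [hJ]
  rw [← Finset.sum_div, Finset.sum_add_distrib, hl1, hl2]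
  simp only [pow_two, hl2]
  have hd : (d : ℝ) + 1 ≠ 0 := by positivity
  simp
  field_simp
  ring


/-- **Haar average of the purity-constrained IGP over the unitary group.**
For `d ≥ 2` and a real density matrix `ρ` of purity `P = Tr(ρ²)`,
`∫_{U(d)} ∫_{O(d)} I(U(OρOᵀ)U†) dμ_O(O) dμ_U(U) = (dP − 1)/(2(d+1))`. -/
theorem haar_avg_purity_constrained_IGP
    (d : ℕ) (hd : 2 ≤ d)
    (ρ : Matrix (Fin d) (Fin d) ℝ) (hρsymm : ρ.IsSymm) (hρpsd : ρ.PosSemidef)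
    (hρtr : ρ.trace = 1) (P : ℝ) (hP : (ρ * ρ).trace = P)
    (μO : Measure (Matrix.orthogonalGroup (Fin d) ℝ))
    [μO.IsHaarMeasure] [IsProbabilityMeasure μO]
    (μU : Measure (Matrix.unitaryGroup (Fin d) ℂ))
    [μU.IsHaarMeasure] [IsProbabilityMeasure μU] :
    ∫ U : Matrix.unitaryGroup (Fin d) ℂ,
        ∫ O : Matrix.orthogonalGroup (Fin d) ℝ,
          Imag ((U : Matrix (Fin d) (Fin d) ℂ) *
              (((O : Matrix (Fin d) (Fin d) ℝ).map Complex.ofReal) * (ρ.map Complex.ofReal) *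
                ((O : Matrix (Fin d) (Fin d) ℝ).map Complex.ofReal)ᵀ) *
              (U : Matrix (Fin d) (Fin d) ℂ)ᴴ) ∂μO ∂μU
      = ((d : ℝ) * P - 1) / (2 * (d + 1)) := by
  rw [integral_integral_swap_of_hasCompactSupport]
  · have : ∀ O : Matrix.orthogonalGroup (Fin d) ℝ,
        ∫ U : Matrix.unitaryGroup (Fin d) ℂ,
          Imag ((U : Matrix (Fin d) (Fin d) ℂ) *
              (((O : Matrix (Fin d) (Fin d) ℝ).map Complex.ofReal) * (ρ.map Complex.ofReal) *
                ((O : Matrix (Fin d) (Fin d) ℝ).map Complex.ofReal)ᵀ) *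
              (U : Matrix (Fin d) (Fin d) ℂ)ᴴ) ∂μU = ((d : ℝ) * P - 1) / (2 * (d + 1)) := by
      intro O
      set Q : Matrix (Fin d) (Fin d) ℝ := (O : Matrix (Fin d) (Fin d) ℝ) with hQ
      have hQQ : Qᵀ * Q = 1 := Unitary.star_mul_self_of_mem O.2
      have e : (Q.map Complex.ofReal) * (ρ.map Complex.ofReal) * (Q.map Complex.ofReal)ᵀ =
          (Q * ρ * Qᵀ).map Complex.ofReal := by
        ext i j
        simp [Matrix.mul_apply]
      have htr : ∀ A : Matrix (Fin d) (Fin d) ℝ, (A.map Complex.ofReal).trace = (A.trace : ℂ) := by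
        intro A; simp [Matrix.trace]
      have hmm : (Q * ρ * Qᵀ).map Complex.ofReal * (Q * ρ * Qᵀ).map Complex.ofReal =
          ((Q * ρ * Qᵀ) * (Q * ρ * Qᵀ)).map Complex.ofReal := by
        ext i j
        simp [Matrix.mul_apply (M := Matrix.map _ _), Matrix.mul_apply (M := Q * ρ * Qᵀ)]
      rw [e]
      apply int_U
      · have hs : (Q * ρ * Qᵀ)ᵀ = Q * ρ * Qᵀ := by
          simp [transpose_mul, hρsymm.eq, Matrix.mul_assoc]
        ext i j
        have := congrFun (congrFun hs i) j
        rw [transpose_apply] at this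
        simp [conjTranspose_apply, this]
      · rw [htr, Matrix.trace_mul_comm, ← Matrix.mul_assoc, hQQ, Matrix.one_mul, hρtr]
        simp
      · have e2 : (Q * ρ * Qᵀ) * (Q * ρ * Qᵀ) = Q * (ρ * ρ) * Qᵀ := by
          simp only [Matrix.mul_assoc]
          rw [← Matrix.mul_assoc Qᵀ Q, hQQ, Matrix.one_mul]
        rw [hmm, htr, e2, Matrix.trace_mul_comm, ← Matrix.mul_assoc, hQQ, Matrix.one_mul, hP]
    simp only [this]
    simp
  · unfold Imag Function.uncurry
    have hc : Continuous fun p : Matrix.unitaryGroup (Fin d) ℂ × Matrix.orthogonalGroup (Fin d) ℝ =>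
        (p.2 : Matrix (Fin d) (Fin d) ℝ).map Complex.ofReal :=
      (continuous_subtype_val.comp continuous_snd).matrix_map Complex.continuous_ofReal
    have hu : Continuous fun p : Matrix.unitaryGroup (Fin d) ℂ × Matrix.orthogonalGroup (Fin d) ℝ =>
        (p.1 : Matrix (Fin d) (Fin d) ℂ) := continuous_subtype_val.comp continuous_fst
    have hX := (hu.matrix_mul ((hc.matrix_mul (continuous_const
      (y := ρ.map Complex.ofReal))).matrix_mul hc.matrix_transpose)).matrix_mul
        hu.matrix_conjTranspose
    have hY := hX.sub hX.matrix_transpose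
    exact continuous_const.mul (Complex.continuous_re.comp
      (hY.matrix_conjTranspose.matrix_mul hY).matrix_trace)
  · exact HasCompactSupport.of_compactSpace _
end
end

section
/- Let d ≥ 2 and let i, j, m, n ∈ {1,…,d}. Then, with respect to the Haar probability measure μ_U on the group U(d) of d×d complex unitary matrices, ∫_{U(d)} (U_{ji})² (conj(U_{nm}))² dμ_U(U) = (2/(d(d+1)))·δ_{jn}·δ_{im}. -/
open MeasureTheory Matrix

noncomputable section

instance haarAux_borel (d : ℕ) : BorelSpace (Matrix.unitaryGroup (Fin d) ℂ) := ⟨rfl⟩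

lemma haarAux_entry_cont (d : ℕ) (a b : Fin d) :
    Continuous (fun U : Matrix.unitaryGroup (Fin d) ℂ => (U : Matrix (Fin d) (Fin d) ℂ) a b) :=
  (continuous_subtype_val).matrix_elem a b

lemma haarAux_integrable (d : ℕ) (μ : Measure (Matrix.unitaryGroup (Fin d) ℂ))
    [IsProbabilityMeasure μ] (a b a' b' i m : Fin d) :
    Integrable (fun U : Matrix.unitaryGroup (Fin d) ℂ =>
      (U : Matrix (Fin d) (Fin d) ℂ) a i * (U : Matrix (Fin d) (Fin d) ℂ) b i *
      (starRingEnd ℂ ((U : Matrix (Fin d) (Fin d) ℂ) a' m) *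
       starRingEnd ℂ ((U : Matrix (Fin d) (Fin d) ℂ) b' m))) μ := by
  have hc : Continuous (fun U : Matrix.unitaryGroup (Fin d) ℂ =>
      (U : Matrix (Fin d) (Fin d) ℂ) a i * (U : Matrix (Fin d) (Fin d) ℂ) b i *
      (starRingEnd ℂ ((U : Matrix (Fin d) (Fin d) ℂ) a' m) *
       starRingEnd ℂ ((U : Matrix (Fin d) (Fin d) ℂ) b' m))) :=
    ((haarAux_entry_cont d a i).mul (haarAux_entry_cont d b i)).mul
      ((Complex.continuous_conj.comp (haarAux_entry_cont d a' m)).mul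
        (Complex.continuous_conj.comp (haarAux_entry_cont d b' m)))
  refine Integrable.of_bound hc.measurable.aestronglyMeasurable 1 (Filter.Eventually.of_forall ?_)
  intro U
  simp only [norm_mul, RCLike.norm_conj]
  have h1 := fun x y => entry_norm_bound_of_unitary U.2 x y
  have e1 := mul_le_one₀ (h1 a i) (norm_nonneg _) (h1 b i)
  have e2 := mul_le_one₀ (h1 a' m) (norm_nonneg _) (h1 b' m)
  exact mul_le_one₀ e1 (by positivity) e2

lemma haarAux_householder (d : ℕ) (w : Fin d → ℂ) (t : ℂ) (ht : star t = t)
    (h : t * (star w ⬝ᵥ w) = 2) :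
    1 - t • vecMulVec w (star w) ∈ Matrix.unitaryGroup (Fin d) ℂ := by
  rw [Matrix.mem_unitaryGroup_iff]
  have hs : star (1 - t • vecMulVec w (star w)) = 1 - t • vecMulVec w (star w) := by
    rw [star_sub, star_one, star_smul, ht, star_eq_conjTranspose, conjTranspose_vecMulVec, star_star]
  have h2 : (t • vecMulVec w (star w)) * (t • vecMulVec w (star w))
      = (2 : ℂ) • (t • vecMulVec w (star w)) := by
    rw [smul_mul_smul_comm, vecMulVec_mul_vecMulVec, vecMulVec_smul, smul_smul, smul_smul, ← h]
    congr 1; ring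
  rw [hs, sub_mul, mul_sub, mul_sub, h2, one_mul, one_mul, mul_one, two_smul]
  abel

lemma haarAux_int4 {X : Type*} [MeasurableSpace X] (μ : Measure X) (f g h k : X → ℂ)
    (hf : Integrable f μ) (hg : Integrable g μ) (hh : Integrable h μ) (hk : Integrable k μ) :
    ∫ x, (f x + g x + (h x + k x)) ∂μ
      = (∫ x, f x ∂μ) + (∫ x, g x ∂μ) + ((∫ x, h x ∂μ) + (∫ x, k x ∂μ)) := by
  rw [← integral_add hf hg, ← integral_add hh hk]
  exact integral_add (hf.add hg) (hh.add hk)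

lemma haarAux_int3 {X : Type*} [MeasurableSpace X] (μ : Measure X) (f g h : X → ℂ)
    (hf : Integrable f μ) (hg : Integrable g μ) (hh : Integrable h μ) {a b c : ℂ} :
    ∫ x, (a * f x + b * g x + c * h x) ∂μ
      = a * (∫ x, f x ∂μ) + b * (∫ x, g x ∂μ) + c * (∫ x, h x ∂μ) := by
  rw [← integral_const_mul, ← integral_const_mul, ← integral_const_mul,
    ← integral_add (hf.const_mul a) (hg.const_mul b)]
  exact integral_add ((hf.const_mul a).add (hg.const_mul b)) (hh.const_mul c)

/-- row action of a reflection -/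
lemma haarAux_refl (d : ℕ) (j k : Fin d) (hjk : j ≠ k) (p t : ℂ) (ht : star t = t)
    (h : t * (1 + star p * p) = 2) :
    ∃ V : Matrix.unitaryGroup (Fin d) ℂ, ∀ (U : Matrix.unitaryGroup (Fin d) ℂ) (i : Fin d),
      ((V * U : Matrix.unitaryGroup (Fin d) ℂ) : Matrix (Fin d) (Fin d) ℂ) j i
       = (1 - t) * (U : Matrix (Fin d) (Fin d) ℂ) j i
         - t * star p * (U : Matrix (Fin d) (Fin d) ℂ) k i := by
  have hw : star (Pi.single j 1 + Pi.single k p : Fin d → ℂ) = Pi.single j 1 + Pi.single k (star p) := by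
    simp
  have hM := haarAux_householder d (Pi.single j 1 + Pi.single k p) t ht (by
    rw [hw, ← h]
    simp [dotProduct_add, hjk, hjk.symm])
  rw [hw] at hM
  obtain ⟨M, hMd⟩ : ∃ M : Matrix (Fin d) (Fin d) ℂ, M = 1 - t • vecMulVec
    (Pi.single j 1 + Pi.single k p) (Pi.single j 1 + Pi.single k (star p)) := ⟨_, rfl⟩
  rw [← hMd] at hM
  refine ⟨⟨M, hM⟩, ?_⟩
  intro U i
  rw [Matrix.UnitaryGroup.mul_val]
  generalize (U : Matrix (Fin d) (Fin d) ℂ) = A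
  change (M * A) j i = _
  rw [hMd]
  simp only [sub_mul, one_mul, Matrix.sub_apply, smul_mul_assoc, Matrix.smul_apply, vecMulVec_mul,
      vecMulVec_apply, add_vecMul]
  simp [hjk, hjk.symm]
  ring

lemma haarAux_diag (d : ℕ) (j : Fin d) :
    ∃ V : Matrix.unitaryGroup (Fin d) ℂ, ∀ (U : Matrix.unitaryGroup (Fin d) ℂ) (n i : Fin d),
      ((V * U : Matrix.unitaryGroup (Fin d) ℂ) : Matrix (Fin d) (Fin d) ℂ) n i
       = (if n = j then Complex.I else 1) * (U : Matrix (Fin d) (Fin d) ℂ) n i := by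
  refine ⟨⟨diagonal (fun n => if n = j then Complex.I else 1), ?_⟩, ?_⟩
  · rw [Matrix.mem_unitaryGroup_iff, star_eq_conjTranspose, diagonal_conjTranspose,
      diagonal_mul_diagonal, ← diagonal_one]
    congr 1
    ext n
    by_cases hn : n = j <;> simp [hn]
  · intro U n i
    rw [Matrix.UnitaryGroup.mul_val, diagonal_mul]

theorem haar_unitary_entry_fourth_moment
    (d : ℕ) (hd : 2 ≤ d) (i j m n : Fin d)
    (μ : Measure (Matrix.unitaryGroup (Fin d) ℂ))
    [μ.IsHaarMeasure] [IsProbabilityMeasure μ] :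
    ∫ U : Matrix.unitaryGroup (Fin d) ℂ,
        ((U : Matrix (Fin d) (Fin d) ℂ) j i) ^ 2 *
          (starRingEnd ℂ ((U : Matrix (Fin d) (Fin d) ℂ) n m)) ^ 2 ∂μ
      = (2 / ((d : ℂ) * (d + 1))) * (if j = n then 1 else 0) * (if i = m then 1 else 0) := by
  by_cases hjn : j = n
  swap
  · obtain ⟨V, hV⟩ := haarAux_diag d j
    have h := integral_mul_left_eq_self (μ := μ) (fun U : Matrix.unitaryGroup (Fin d) ℂ =>
      ((U : Matrix (Fin d) (Fin d) ℂ) j i) ^ 2 *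
          (starRingEnd ℂ ((U : Matrix (Fin d) (Fin d) ℂ) n m)) ^ 2) V
    simp only [hV, if_true, if_neg (Ne.symm hjn), one_mul, mul_pow, Complex.I_sq, neg_mul,
      integral_neg] at h
    rw [if_neg hjn, mul_zero, zero_mul]
    exact CharZero.neg_eq_self_iff.mp h
  subst hjn
  set T : Fin d → Fin d → ℂ := fun a b => ∫ U : Matrix.unitaryGroup (Fin d) ℂ,
      (U : Matrix (Fin d) (Fin d) ℂ) a i * (U : Matrix (Fin d) (Fin d) ℂ) b i *
      (starRingEnd ℂ ((U : Matrix (Fin d) (Fin d) ℂ) a m) *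
       starRingEnd ℂ ((U : Matrix (Fin d) (Fin d) ℂ) b m)) ∂μ with hT
  have hint := fun a b => haarAux_integrable d μ a b a b i m
  have hdiag : ∀ a, T a a = ∫ U : Matrix.unitaryGroup (Fin d) ℂ,
        ((U : Matrix (Fin d) (Fin d) ℂ) a i) ^ 2 *
          (starRingEnd ℂ ((U : Matrix (Fin d) (Fin d) ℂ) a m)) ^ 2 ∂μ := by
    intro a; simp only [hT, pow_two]
  -- total sum
  have hsum : ∑ a, ∑ b, T a b = if i = m then 1 else 0 := by
    have : ∀ U : Matrix.unitaryGroup (Fin d) ℂ, ∑ a, ∑ b,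
      ((U : Matrix (Fin d) (Fin d) ℂ) a i * (U : Matrix (Fin d) (Fin d) ℂ) b i *
      (starRingEnd ℂ ((U : Matrix (Fin d) (Fin d) ℂ) a m) *
       starRingEnd ℂ ((U : Matrix (Fin d) (Fin d) ℂ) b m))) = if i = m then 1 else 0 := by
      intro U
      have h1 := congrFun (congrFun (Matrix.mem_unitaryGroup_iff'.mp U.2) m) i
      rw [Matrix.mul_apply, Matrix.one_apply] at h1
      have h2 : (∑ a, (U : Matrix (Fin d) (Fin d) ℂ) a i *
        starRingEnd ℂ ((U : Matrix (Fin d) (Fin d) ℂ) a m)) = if i = m then 1 else 0 := by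
        simp only [eq_comm (a := i)]
        rw [← h1]
        refine Finset.sum_congr rfl fun a _ => ?_
        rw [mul_comm]; rfl
      calc _ = (∑ a, (U : Matrix (Fin d) (Fin d) ℂ) a i *
        starRingEnd ℂ ((U : Matrix (Fin d) (Fin d) ℂ) a m)) * (∑ a, (U : Matrix (Fin d) (Fin d) ℂ) a i *
        starRingEnd ℂ ((U : Matrix (Fin d) (Fin d) ℂ) a m)) := by
            rw [Finset.sum_mul_sum]
            refine Finset.sum_congr rfl fun a _ => Finset.sum_congr rfl fun b _ => ?_
            ring
        _ = _ := by rw [h2]; split_ifs <;> simp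
    calc ∑ a, ∑ b, T a b = ∫ U : Matrix.unitaryGroup (Fin d) ℂ, ∑ a, ∑ b,
      ((U : Matrix (Fin d) (Fin d) ℂ) a i * (U : Matrix (Fin d) (Fin d) ℂ) b i *
      (starRingEnd ℂ ((U : Matrix (Fin d) (Fin d) ℂ) a m) *
       starRingEnd ℂ ((U : Matrix (Fin d) (Fin d) ℂ) b m))) ∂μ := by
          rw [integral_finsetSum _ (fun a _ => integrable_finsetSum _ fun b _ => hint a b)]
          refine Finset.sum_congr rfl fun a _ => ?_
          rw [integral_finsetSum _ (fun b _ => hint a b)]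
      _ = _ := by simp only [this]; simp
  have hswap : ∀ a b, T a a = T b b := by
    intro a b
    by_cases hab : a = b
    · rw [hab]
    obtain ⟨V, hV⟩ := haarAux_refl d a b hab (-1) 1 (by simp) (by norm_num)
    have h := integral_mul_left_eq_self (μ := μ) (fun U : Matrix.unitaryGroup (Fin d) ℂ =>
      (U : Matrix (Fin d) (Fin d) ℂ) a i * (U : Matrix (Fin d) (Fin d) ℂ) a i *
      (starRingEnd ℂ ((U : Matrix (Fin d) (Fin d) ℂ) a m) *
       starRingEnd ℂ ((U : Matrix (Fin d) (Fin d) ℂ) a m))) V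
    simp only [hT]
    rw [← h]
    refine integral_congr_ae (Filter.Eventually.of_forall fun U => ?_)
    simp [hV]
  have hrot : ∀ a b, a ≠ b → T a b = T a a / 2 := by
    intro a b hab
    have key : ∀ c : ℂ, star c * c = 1 → T a a = ∫ U : Matrix.unitaryGroup (Fin d) ℂ,
      (3/5 * (U : Matrix (Fin d) (Fin d) ℂ) a i + 4/5 * star c * (U : Matrix (Fin d) (Fin d) ℂ) b i)^2 *
      (3/5 * starRingEnd ℂ ((U : Matrix (Fin d) (Fin d) ℂ) a m) +
        4/5 * c * starRingEnd ℂ ((U : Matrix (Fin d) (Fin d) ℂ) b m))^2 ∂μ := by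
      intro c hc
      obtain ⟨V, hV⟩ := haarAux_refl d a b hab (-2 * c) (2/5) (by simp) (by
        simp only [star_mul', star_neg, star_ofNat]
        linear_combination (8/5) * hc)
      rw [hdiag, ← integral_mul_left_eq_self (μ := μ) _ V]
      refine integral_congr_ae (Filter.Eventually.of_forall fun U => ?_)
      simp only [hV]
      simp [map_ofNat]
      ring
    have hI : ∀ c : ℂ, star c * c = 1 → Integrable (fun U : Matrix.unitaryGroup (Fin d) ℂ =>
      (3/5 * (U : Matrix (Fin d) (Fin d) ℂ) a i + 4/5 * star c * (U : Matrix (Fin d) (Fin d) ℂ) b i)^2 *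
      (3/5 * starRingEnd ℂ ((U : Matrix (Fin d) (Fin d) ℂ) a m) +
        4/5 * c * starRingEnd ℂ ((U : Matrix (Fin d) (Fin d) ℂ) b m))^2) μ := by
      intro c hc
      obtain ⟨V, hV⟩ := haarAux_refl d a b hab (-2 * c) (2/5) (by simp) (by
        simp only [star_mul', star_neg, star_ofNat]
        linear_combination (8/5) * hc)
      refine ((hint a a).comp_mul_left V).congr (Filter.Eventually.of_forall fun U => ?_)
      simp only [hV]
      simp [map_ofNat]
      ring
    have c1 : star (1:ℂ) * 1 = 1 := by simp
    have c2 : star (-1:ℂ) * (-1) = 1 := by simp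
    have c3 : star (Complex.I) * Complex.I = 1 := by simp
    have c4 : star (-Complex.I) * (-Complex.I) = 1 := by simp
    have h4 : 4 * T a a = 4 * (81/625 * T a a + 4 * (144/625) * T a b + 256/625 * T b b) := by
      calc 4 * T a a = T a a + T a a + (T a a + T a a) := by ring
        _ = _ := by
          nth_rewrite 1 [key _ c1]
          nth_rewrite 1 [key _ c2]
          nth_rewrite 1 [key _ c3]
          nth_rewrite 1 [key _ c4]
          rw [← haarAux_int4 μ _ _ _ _ (hI _ c1) (hI _ c2) (hI _ c3) (hI _ c4)]
          simp only [hT]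
          rw [← haarAux_int3 μ _ _ _ (hint a a) (hint a b) (hint b b), ← integral_const_mul]
          refine integral_congr_ae (Filter.Eventually.of_forall fun U => ?_)
          simp only [star_one, star_neg, Complex.star_def, Complex.conj_I]
          ring_nf
          simp only [Complex.I_sq, Complex.I_pow_four]
          ring
    have := hswap a b
    linear_combination (-625/2304) * h4 + (4*256/2304) * this
  rw [← hdiag, if_pos rfl, mul_one, ← hsum]
  have hval : ∀ a b, T a b = T j j / 2 + if a = b then T j j / 2 else 0 := by
    intro a b
    by_cases hab : a = b
    · subst hab; rw [if_pos rfl, hswap a j]; ring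
    · rw [if_neg hab, hrot a b hab, hswap a j]; ring
  have hS : ∑ a, ∑ b, T a b = d * (d * (T j j / 2)) + d * (T j j / 2) := by
    calc _ = ∑ a : Fin d, ∑ b : Fin d, (T j j / 2 + if a = b then T j j / 2 else 0) :=
          Finset.sum_congr rfl fun a _ => Finset.sum_congr rfl fun b _ => hval a b
      _ = _ := by simp [Finset.sum_add_distrib]
  rw [hS]
  have h1 : (d : ℂ) ≠ 0 := by
    have : d ≠ 0 := by omega
    exact_mod_cast this
  have h2 : (d : ℂ) + 1 ≠ 0 := by exact_mod_cast Nat.succ_ne_zero d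
  field_simp
end
end
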